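/- For all even natural numbers n, m ≥ 4, the dihedral-type Artin groups I_2(n) and I_2(m) are elementarily equivalent in the first-order language of groups if and only if n = m. -/

import Mathlib

/-!
Write `n = 2k` and let `t = xy` in `I₂(2k)`. The defining relation says that `t ^ k` is central, and
the normal closure of `x` is free on the `k` conjugates `tⁱ x t⁻ⁱ`, so that `I₂(2k)` is the semidirect
product of a free group on `ZMod k` with `ℤ`, a generator `t` of `ℤ` acting by the cyclic shift
(`toModel_injective`; only this embedding is needed).

In the semidirect product, if some positive power of `g` is central then so is `g ^ k`: the element
`g ^ k` has the form `(w, ks)`, the second factor of which acts trivially, and a positive power of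
it is central; the free component of a central element is fixed by the shift, hence trivial
(`eq_one_of_shift_eq`), so `w = 1` by torsion-freeness (`central_pow_of_central_pow`). On the other
hand `t ^ i` is central if and only if `k ∣ i` (`central_pow_dvd`). Therefore the sentence
saying that every `g` with `g ^ a` central has `g ^ b` central holds in `I₂(2b)` for all `a > 0`, while it
holds in `I₂(2a)` only if `a ∣ b`. Elementary equivalence of `I₂(2k)` and `I₂(2l)` thus forces
`k ∣ l` and `l ∣ k`.
-/


open FirstOrder FreeGroup

/-- Function symbols of the first-order language of groups: a constant `1`,
a unary function `⁻¹`, and a binary function `*`. -/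
inductive GrpFunc : ℕ → Type
  | one : GrpFunc 0
  | inv : GrpFunc 1
  | mul : GrpFunc 2

/-- The first-order language of groups. -/
def grpLang : FirstOrder.Language := ⟨GrpFunc, fun _ => Empty⟩

/-- The canonical interpretation of the language of groups in any group. -/
instance grpStructure (G : Type*) [Group G] : grpLang.Structure G where
  funMap {_} f := match f with
    | .one => fun _ => 1
    | .inv => fun v => (v 0)⁻¹
    | .mul => fun v => v 0 * v 1
  RelMap {_} r := Empty.elim r

/-- The alternating product `⟨x,y⟩^m = xyxy⋯` of length `m`. -/
def altProd {M : Type*} [Monoid M] (x y : M) : ℕ → M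
  | 0 => 1
  | k + 1 => x * altProd y x k

/-- The single relator `⟨x,y⟩ⁿ (⟨y,x⟩ⁿ)⁻¹` of the dihedral-type Artin group `I₂(n)`,
with generators `x = of 0` and `y = of 1`. -/
def ArtinI2Rels (n : ℕ) : Set (FreeGroup (Fin 2)) :=
  {altProd (of 0) (of 1) n * (altProd (of 1) (of 0) n)⁻¹}

/-- The dihedral-type Artin group `I₂(n)`. -/
abbrev ArtinI2 (n : ℕ) : Type := PresentedGroup (ArtinI2Rels n)

/-! ### A first-order sentence about powers in the centre -/

/-- The term `s ^ k` in the language of groups. -/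
def powTerm {α : Type} (s : grpLang.Term α) : ℕ → grpLang.Term α
  | 0 => .func (GrpFunc.one : grpLang.Functions 0) Fin.elim0
  | k + 1 => .func (GrpFunc.mul : grpLang.Functions 2) ![powTerm s k, s]

lemma realize_powTerm {G : Type*} [Group G] {α : Type} (v : α → G) (s : grpLang.Term α) (k : ℕ) :
    (powTerm s k).realize v = (s.realize v) ^ k := by
  induction k with
  | zero => rw [pow_zero]; rfl
  | succ k ih =>
    rw [pow_succ, ← ih]
    rfl

/-- The formula saying that the `k`-th power of the element `&0` is central. -/
def centralPowFormula (k : ℕ) : grpLang.BoundedFormula Empty 1 :=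
  let g : grpLang.Term (Empty ⊕ Fin 2) := .var (.inr 0)
  let h : grpLang.Term (Empty ⊕ Fin 2) := .var (.inr 1)
  .all (.equal (.func (GrpFunc.mul : grpLang.Functions 2) ![powTerm g k, h])
    (.func (GrpFunc.mul : grpLang.Functions 2) ![h, powTerm g k]))

/-- The sentence saying that every `g` with `g ^ a` central also has `g ^ b` central. -/
def centralPowSentence (a b : ℕ) : grpLang.Sentence :=
  FirstOrder.Language.BoundedFormula.all
    ((centralPowFormula a).imp (centralPowFormula b))

lemma realize_centralPowFormula {G : Type*} [Group G] (k : ℕ) (v : Empty → G) (g : G)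
    (w : Fin 0 → G) :
    (centralPowFormula k).Realize v (Fin.snoc w g) ↔ ∀ h : G, g ^ k * h = h * g ^ k := by
  refine forall_congr' fun h => ?_
  change (powTerm _ k).realize _ * h = h * (powTerm _ k).realize _ ↔ _
  rw [realize_powTerm]
  rfl

lemma realize_centralPowSentence (G : Type*) [Group G] (a b : ℕ) :
    G ⊨ centralPowSentence a b ↔
      ∀ g : G, (∀ h : G, g ^ a * h = h * g ^ a) → ∀ h : G, g ^ b * h = h * g ^ b := by
  refine forall_congr' fun g => ?_
  rw [FirstOrder.Language.BoundedFormula.realize_imp, realize_centralPowFormula,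
    realize_centralPowFormula]

/-! ### The semidirect product model -/

/-- The action of `ℤ` on the free group on `ZMod k` by cyclic shifts of the generators. -/
def shiftHom (k : ℕ) : Multiplicative ℤ →* MulAut (FreeGroup (ZMod k)) :=
  MonoidHom.mk' (fun s => freeGroupCongr (Equiv.addLeft ((s.toAdd : ℤ) : ZMod k))) (by
    intro a b
    apply MulEquiv.toMonoidHom_injective
    ext i
    simp [add_assoc])

lemma shiftHom_of (k : ℕ) (s : Multiplicative ℤ) (i : ZMod k) :
    shiftHom k s (of i) = of (((s.toAdd : ℤ) : ZMod k) + i) := by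
  simp [shiftHom]

/-- The semidirect product of the free group on `ZMod k` with `ℤ` acting by cyclic shifts. -/
abbrev Model (k : ℕ) : Type := FreeGroup (ZMod k) ⋊[shiftHom k] Multiplicative ℤ

/-- Shifts by multiples of `k` act trivially. -/
lemma shiftHom_pow (k : ℕ) (s : Multiplicative ℤ) : shiftHom k (s ^ k) = 1 := by
  apply MulEquiv.toMonoidHom_injective
  ext i
  change shiftHom k (s ^ k) (of i) = of i
  simp only [shiftHom_of, toAdd_pow]
  simp

/-- The shift changes the first letter of every nonempty reduced word. -/
lemma eq_one_of_shift_eq {k : ℕ} (hk : 2 ≤ k) (u : FreeGroup (ZMod k))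
    (hu : shiftHom k (Multiplicative.ofAdd 1) u = u) : u = 1 := by
  have : Fact (1 < k) := ⟨hk⟩
  set f : ZMod k → ZMod k := fun i => 1 + i with hf
  have hinj : Function.Injective f := add_right_injective 1
  have hred : FreeGroup.IsReduced (u.toWord.map fun x => (f x.1, x.2)) := by
    have h := FreeGroup.isReduced_toWord (x := u)
    unfold FreeGroup.IsReduced at h ⊢
    rw [List.isChain_map]
    exact h.imp fun a b hab e => hab (hinj e)
  have hw : u.toWord = u.toWord.map fun x => (f x.1, x.2) := by
    have h1 : shiftHom k (Multiplicative.ofAdd 1) u = FreeGroup.map f u := by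
      simp [shiftHom, freeGroupCongr, hf]
    rw [h1] at hu
    conv_lhs => rw [← hu, ← FreeGroup.mk_toWord (x := u), FreeGroup.map.mk, FreeGroup.toWord_mk,
      hred.reduce_eq]
  rw [← FreeGroup.toWord_eq_nil_iff]
  cases h : u.toWord with
  | nil => rfl
  | cons a L =>
    rw [h] at hw
    simp [hf, Prod.ext_iff] at hw

lemma inr_pow_central (k : ℕ) (s : Multiplicative ℤ) (z : Model k) :
    (SemidirectProduct.inr (s ^ k) : Model k) * z = z * SemidirectProduct.inr (s ^ k) := by
  ext
  · simp only [SemidirectProduct.mul_left, SemidirectProduct.right_inr,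
      SemidirectProduct.left_inr, shiftHom_pow]
    simp
  · simp [mul_comm]

/-! ### Embedding the Artin group into the model -/

lemma altProd_two_mul {M : Type*} [Monoid M] (x y : M) (k : ℕ) :
    altProd x y (2 * k) = (x * y) ^ k := by
  induction k with
  | zero => rw [pow_zero]; rfl
  | succ k ih =>
    rw [pow_succ', ← ih, mul_assoc]
    rfl

lemma map_altProd {M N : Type*} [Monoid M] [Monoid N] (f : M →* N) (x y : M) (k : ℕ) :
    f (altProd x y k) = altProd (f x) (f y) k := by
  induction k generalizing x y with
  | zero => exact _root_.map_one f
  | succ k ih => simp [altProd, ih]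

/-- The images of `x` and `y`: `x` goes to the free generator `0` and `xy` to the generator
of `ℤ`. -/
def modelGen (k : ℕ) : Fin 2 → Model k :=
  ![SemidirectProduct.inl (of 0),
    (SemidirectProduct.inl (of 0))⁻¹ * SemidirectProduct.inr (Multiplicative.ofAdd 1)]

lemma modelGen_rels (k : ℕ) :
    ∀ r ∈ ArtinI2Rels (2 * k), FreeGroup.lift (modelGen k) r = 1 := by
  rintro r rfl
  rw [_root_.map_mul, _root_.map_inv, map_altProd, map_altProd, altProd_two_mul, altProd_two_mul, mul_inv_eq_one]
  simp only [FreeGroup.lift_apply_of, modelGen, Matrix.cons_val_zero, Matrix.cons_val_one]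
  set X : Model k := SemidirectProduct.inl (of 0)
  set s : Multiplicative ℤ := Multiplicative.ofAdd 1
  have h := inr_pow_central k s X
  have h2 := conj_pow (i := k) (a := X⁻¹) (b := (SemidirectProduct.inr s : Model k))
  rw [inv_inv] at h2
  rw [h2, mul_inv_cancel_left, ← _root_.map_pow, mul_assoc, h, inv_mul_cancel_left]

/-- The homomorphism from `I₂(2k)` to the semidirect product. -/
def toModel (k : ℕ) : ArtinI2 (2 * k) →* Model k :=
  PresentedGroup.toGroup (modelGen_rels k)

/-- The generator `x` of `I₂(2k)`. -/
def genX (k : ℕ) : ArtinI2 (2 * k) := PresentedGroup.of 0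

/-- The element `t = xy` of `I₂(2k)`. -/
def genT (k : ℕ) : ArtinI2 (2 * k) := PresentedGroup.of 0 * PresentedGroup.of 1

lemma toModel_genX (k : ℕ) : toModel k (genX k) = SemidirectProduct.inl (of 0) := by
  simp [toModel, genX, modelGen]

lemma toModel_genT (k : ℕ) :
    toModel k (genT k) = SemidirectProduct.inr (Multiplicative.ofAdd 1) := by
  simp [toModel, genT, modelGen]

lemma genT_pow_commute (k : ℕ) : Commute (genT k ^ k) (genX k) := by
  have h : (PresentedGroup.mk (ArtinI2Rels (2 * k)))
      (altProd (of 0) (of 1) (2 * k) * (altProd (of 1) (of 0) (2 * k))⁻¹) = 1 :=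
    PresentedGroup.one_of_mem rfl
  rw [_root_.map_mul, _root_.map_inv, map_altProd, map_altProd, altProd_two_mul, altProd_two_mul,
    mul_inv_eq_one] at h
  change (genX k * PresentedGroup.of 1) ^ k = (PresentedGroup.of 1 * genX k) ^ k at h
  change (genX k * PresentedGroup.of 1) ^ k * genX k = genX k * (genX k * PresentedGroup.of 1) ^ k
  conv_rhs => rw [h]
  have h2 := conj_pow (i := k) (a := genX k) (b := PresentedGroup.of 1 * genX k)
  rw [← eq_mul_inv_iff_mul_eq, ← h2]
  group

/-- The conjugate of `x` by `t ^ a` depends only on `a` modulo `k`. -/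
lemma conj_genX_congr (k : ℕ) {a b : ℤ} (h : (a : ZMod k) = b) :
    genT k ^ a * genX k * (genT k ^ a)⁻¹ = genT k ^ b * genX k * (genT k ^ b)⁻¹ := by
  obtain ⟨c, hc⟩ := (ZMod.intCast_eq_intCast_iff_dvd_sub a b k).1 h
  obtain rfl : b = a + k * c := by omega
  have hcomm : Commute (genT k ^ ((k : ℤ) * c)) (genX k) := by
    rw [zpow_mul, zpow_natCast]
    exact (genT_pow_commute k).zpow_left c
  have hconj : genT k ^ ((k : ℤ) * c) * genX k * (genT k ^ ((k : ℤ) * c))⁻¹ = genX k := by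
    rw [hcomm.eq, mul_inv_cancel_right]
  rw [zpow_add, mul_inv_rev]
  conv_lhs => rw [← hconj]
  simp only [mul_assoc]

/-- The inverse homomorphism, sending the free generator `i` to `tⁱ x t⁻ⁱ`. -/
def ofModel (k : ℕ) : Model k →* ArtinI2 (2 * k) :=
  SemidirectProduct.lift
    (FreeGroup.lift fun i : ZMod k =>
      genT k ^ (i.cast : ℤ) * genX k * (genT k ^ (i.cast : ℤ))⁻¹)
    (zpowersHom _ (genT k)) (by
      intro s
      ext i
      simp only [MonoidHom.comp_apply, MulEquiv.coe_toMonoidHom, shiftHom_of,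
        FreeGroup.lift_apply_of, MulAut.conj_apply, zpowersHom_apply]
      rw [conj_genX_congr k (b := s.toAdd + (i.cast : ℤ)) (by simp), zpow_add, mul_inv_rev]
      simp only [mul_assoc])

lemma toModel_injective (k : ℕ) : Function.Injective (toModel k) := by
  have hX : ofModel k (toModel k (genX k)) = genX k := by
    rw [toModel_genX]
    simp [ofModel]
  have hT : ofModel k (toModel k (genT k)) = genT k := by
    rw [toModel_genT]
    simp [ofModel]
  have h : (ofModel k).comp (toModel k) = MonoidHom.id _ := by
    apply PresentedGroup.ext
    intro i
    fin_cases i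
    · exact hX
    · have e : (PresentedGroup.of 1 : ArtinI2 (2 * k)) = (genX k)⁻¹ * genT k := by
        simp [genX, genT]
      change ofModel k (toModel k (PresentedGroup.of 1)) = PresentedGroup.of 1
      rw [e, _root_.map_mul, _root_.map_mul, _root_.map_inv, _root_.map_inv, hX, hT]
  exact Function.LeftInverse.injective (g := ofModel k) fun z => DFunLike.congr_fun h z

/-! ### Central powers in the Artin group -/

lemma genT_pow_central (k : ℕ) (h : ArtinI2 (2 * k)) : genT k ^ k * h = h * genT k ^ k := by
  apply toModel_injective
  rw [_root_.map_mul, _root_.map_mul, _root_.map_pow, toModel_genT, ← _root_.map_pow, inr_pow_central]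

lemma central_pow_dvd (k i : ℕ) (h : ∀ z, genT k ^ i * z = z * genT k ^ i) : k ∣ i := by
  have h1 := congrArg (fun z => (toModel k z).left) (h (genX k))
  simp only [_root_.map_mul, _root_.map_pow, toModel_genT, toModel_genX] at h1
  rw [← _root_.map_pow] at h1
  simp only [SemidirectProduct.mul_left, SemidirectProduct.right_inr, SemidirectProduct.left_inr,
    SemidirectProduct.left_inl, shiftHom_of, _root_.map_one, mul_one, one_mul] at h1
  have h2 := FreeGroup.of_injective h1
  rw [← ZMod.natCast_eq_zero_iff]
  simpa using h2

/-- A power `g ^ a` with `a > 0` can be central in `I₂(2k)` only if `g ^ k` is. -/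
lemma central_pow_of_central_pow {k : ℕ} (hk : 2 ≤ k) {a : ℕ} (ha : a ≠ 0) (g : ArtinI2 (2 * k))
    (hg : ∀ h, g ^ a * h = h * g ^ a) (h : ArtinI2 (2 * k)) : g ^ k * h = h * g ^ k := by
  set z : Model k := toModel k g
  have hright : (z ^ k).right = z.right ^ k :=
    _root_.map_pow (SemidirectProduct.rightHom (φ := shiftHom k)) z k
  have hsplit : z ^ k = SemidirectProduct.inl (z ^ k).left * SemidirectProduct.inr (z.right ^ k) := by
    rw [← hright, SemidirectProduct.inl_left_mul_inr_right]
  set w := (z ^ k).left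
  set c : Model k := SemidirectProduct.inr (z.right ^ k)
  have hc : ∀ y : Model k, c * y = y * c := inr_pow_central k z.right
  set T : Model k := SemidirectProduct.inr (Multiplicative.ofAdd 1)
  -- `(z ^ k) ^ a` commutes with the generator of `ℤ`, hence so does its free component `w ^ a`.
  have hTz : (z ^ k) ^ a * T = T * (z ^ k) ^ a := by
    have h0 := congrArg (toModel k) (hg (genT k))
    rw [_root_.map_mul, _root_.map_mul, toModel_genT, _root_.map_pow] at h0
    have h1 : Commute (z ^ a) T := h0
    rw [← pow_mul, mul_comm k a, pow_mul]
    exact h1.pow_left k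
  have hTw : T * SemidirectProduct.inl (w ^ a) = SemidirectProduct.inl (w ^ a) * T := by
    rw [hsplit, (show Commute _ c from (hc _).symm).mul_pow, ← _root_.map_pow] at hTz
    have hca : Commute (c ^ a) T := (show Commute c T from hc T).pow_left a
    rw [mul_assoc, hca.eq, ← mul_assoc, ← mul_assoc] at hTz
    exact (mul_right_cancel hTz).symm
  have hfix : shiftHom k (Multiplicative.ofAdd 1) (w ^ a) = w ^ a := by
    have h1 := congrArg SemidirectProduct.left hTw
    simpa only [T, SemidirectProduct.mul_left, SemidirectProduct.left_inr, SemidirectProduct.left_inl,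
      SemidirectProduct.right_inr, SemidirectProduct.right_inl, _root_.map_one, one_mul, mul_one]
      using h1
  have hw : w = 1 := (pow_eq_one_iff_left ha).1 (eq_one_of_shift_eq hk _ hfix)
  apply toModel_injective
  rw [_root_.map_mul, _root_.map_mul, _root_.map_pow]
  change z ^ k * _ = _ * z ^ k
  rw [hsplit, hw, _root_.map_one, one_mul, hc]

lemma dvd_of_elementarilyEquivalent {k l : ℕ} (hk : 2 ≤ k) (hl : 2 ≤ l)
    (h : grpLang.ElementarilyEquivalent (ArtinI2 (2 * k)) (ArtinI2 (2 * l))) : k ∣ l := by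
  have h1 := (realize_centralPowSentence (ArtinI2 (2 * l)) k l).2
    fun g hg => central_pow_of_central_pow hl (by omega) g hg
  rw [← h.realize_sentence, realize_centralPowSentence] at h1
  exact central_pow_dvd k l (h1 (genT k) (genT_pow_central k))

/-- For even `n, m ≥ 4`, the dihedral-type Artin groups `I₂(n)` and `I₂(m)` are
elementarily equivalent in the first-order language of groups iff `n = m`. -/
theorem artinI2_even_elementarilyEquivalent_iff (n m : ℕ) (hn : 4 ≤ n) (hm : 4 ≤ m)
    (hne : Even n) (hme : Even m) :
    grpLang.ElementarilyEquivalent (ArtinI2 n) (ArtinI2 m) ↔ n = m := by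
  constructor
  · intro h
    obtain ⟨k, rfl⟩ := hne.two_dvd
    obtain ⟨l, rfl⟩ := hme.two_dvd
    rw [Nat.dvd_antisymm (dvd_of_elementarilyEquivalent (by omega) (by omega) h)
      (dvd_of_elementarilyEquivalent (by omega) (by omega) h.symm)]
  · rintro rfl
    rfl
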